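/- arXiv:2210.06692 — 2 statements merged into one kernel-verified Lean document; each statement's English description precedes it below -/
import Mathlib

section
/- (Theorem 3, first bullet) For any fixed integer k ≥ 1 and any N ≥ k, the fixed points satisfy Q^π_{N+1,k}(s,a) ≤ Q^π_{N,k}(s,a) for all (s,a); that is, for fixed k the fixed point Q^π_{N,k} element-wise decreases with N. -/
/-- `kmin x k` is the entry in position `k` (0-indexed) of a monotone nondecreasing
sorted arrangement of the tuple `x`, i.e. the `(k+1)`-th smallest entry counted with
multiplicity. -/
noncomputable def kmin {N : ℕ} (x : Fin N → ℝ) (k : Fin N) : ℝ := x (Tuple.sort x k)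

/-- A probability mass function on a finite type: nonnegative and summing to one. -/
def IsPMF {α : Type*} [Fintype α] (p : α → ℝ) : Prop :=
  (∀ a, 0 ≤ p a) ∧ ∑ a, p a = 1

/-- Sup norm `‖Q‖_∞ = max_{(s,a)} |Q(s,a)|` on `S × A → ℝ` (curried). -/
noncomputable def supNorm {S A : Type*} [Fintype S] [Fintype A] [Nonempty S] [Nonempty A]
    (Q : S → A → ℝ) : ℝ :=
  Finset.univ.sup' Finset.univ_nonempty (fun p : S × A => |Q p.1 p.2|)

/-- The `(N,k)`-pessimistic Bellman operator (with `k` given 0-indexed as `k : Fin N`):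
`(B^π_{N,k} Q)(s,a) = r(s,a) + γ · Σ_{v : Fin N → ι} (Π_j P(v_j)) ·
  kmin_k( j ↦ Σ_{s'} M(v_j)(s,a)(s') · Σ_{a'} π(a'|s') · Q(s',a') )`. -/
noncomputable def pessBellman {S A ι : Type*} [Fintype S] [Fintype A] [Fintype ι]
    (r : S → A → ℝ) (γ : ℝ) (P : ι → ℝ) (M : ι → S → A → S → ℝ)
    (π : S → A → ℝ) (N : ℕ) (k : Fin N) (Q : S → A → ℝ) : S → A → ℝ :=
  fun s a => r s a + γ * ∑ v : Fin N → ι, (∏ j, P (v j)) *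
    kmin (fun j => ∑ s', M (v j) s a s' * ∑ a', π s' a' * Q s' a') k

/-!
Three facts carry the argument. Lengthening a tuple can only lower its `k`-th smallest entry, so
`B_{N'} Q ≤ B_N Q` pointwise whenever `N ≤ N'`: the first `N` of `N'` independent draws from `P` are
`N` independent draws. Each `B_N` satisfies Blackwell's conditions: it is monotone and moves by at
most `γ c` when its argument is shifted up by `c`. Under those conditions subsolutions lie below
supersolutions, and a fixed point of `B_{N'}` is a subsolution of `B_N`.
-/

/-- Iterating `u ≤ v + c • e ⟹ u ≤ T u ≤ T (v + c • e) ≤ v + (γ * c) • e` shrinks the gap to `0`. -/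
theorem le_of_le_map_of_map_le_of_discount {E : Type*} [AddCommGroup E] [Module ℝ E]
    [TopologicalSpace E] [ContinuousAdd E] [ContinuousSMul ℝ E] [Preorder E]
    [IsOrderedAddMonoid E] [OrderClosedTopology E] {T : E → E} {e u v : E} {γ : ℝ}
    (hγ0 : 0 ≤ γ) (hγ1 : γ < 1) (hT : Monotone T)
    (hdisc : ∀ w, ∀ c : ℝ, 0 ≤ c → T (w + c • e) ≤ T w + (γ * c) • e)
    (hu : u ≤ T u) (hv : T v ≤ v) (huv : ∃ c : ℝ, 0 ≤ c ∧ u ≤ v + c • e) : u ≤ v := by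
  obtain ⟨c, hc, hgap⟩ := huv
  have hgap_pow : ∀ n : ℕ, u ≤ v + (γ ^ n * c) • e := by
    intro n
    induction n with
    | zero => simpa using hgap
    | succ n ih =>
      calc u ≤ T u := hu
        _ ≤ T (v + (γ ^ n * c) • e) := hT ih
        _ ≤ T v + (γ * (γ ^ n * c)) • e := hdisc v _ (by positivity)
        _ ≤ v + (γ ^ (n + 1) * c) • e := by rw [pow_succ', mul_assoc]; gcongr
  have hlim : Filter.Tendsto (fun n : ℕ => v + (γ ^ n * c) • e) Filter.atTop (nhds v) := by
    simpa using
      (((tendsto_pow_atTop_nhds_zero_of_lt_one hγ0 hγ1).mul_const c).smul_const e).const_add v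
  exact ge_of_tendsto' hlim hgap_pow

theorem exists_nonneg_le_add_smul_one {S A : Type*} [Finite S] [Finite A] (U V : S → A → ℝ) :
    ∃ c : ℝ, 0 ≤ c ∧ U ≤ V + c • 1 := by
  obtain ⟨c, hc, hUV⟩ :=
    (Set.finite_range fun p : S × A => U p.1 p.2 - V p.1 p.2).bddAbove.exists_ge 0
  refine ⟨c, hc, fun s a => ?_⟩
  simpa using sub_le_iff_le_add'.mp (hUV _ ⟨(s, a), rfl⟩)

section Kmin

variable {m n : ℕ}

theorem kmin_le_iff {x : Fin n → ℝ} {k : Fin n} {t : ℝ} :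
    kmin x k ≤ t ↔ k < Fintype.card {j // x j ≤ t} := by
  have hcard : Fintype.card {j // x (Tuple.sort x j) ≤ t} = Fintype.card {j // x j ≤ t} :=
    Fintype.card_congr ((Tuple.sort x).subtypeEquiv fun _ => Iff.rfl)
  rw [← hcard, Fintype.card_subtype]
  exact (Tuple.lt_card_le_iff_apply_le_of_monotone (Tuple.monotone_sort x)).symm

theorem kmin_le_kmin_of_injective {e : Fin m → Fin n} (he : Function.Injective e)
    {x : Fin m → ℝ} {y : Fin n → ℝ} (hyx : ∀ j, y (e j) ≤ x j)
    {k : Fin m} {l : Fin n} (hlk : (l : ℕ) ≤ k) : kmin y l ≤ kmin x k := by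
  rw [kmin_le_iff]
  calc (l : ℕ) ≤ k := hlk
    _ < Fintype.card {j // x j ≤ kmin x k} := kmin_le_iff.mp le_rfl
    _ ≤ Fintype.card {j // y j ≤ kmin x k} :=
      Fintype.card_le_of_injective (Subtype.map e fun j hj => (hyx j).trans hj)
        (Subtype.map_injective _ he)

theorem kmin_mono (k : Fin n) : Monotone fun x : Fin n → ℝ => kmin x k :=
  fun _ _ hxy => kmin_le_kmin_of_injective Function.injective_id hxy le_rfl

theorem kmin_add_const (x : Fin n → ℝ) (c : ℝ) (k : Fin n) :
    kmin (fun j => x j + c) k = kmin x k + c :=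
  eq_of_forall_ge_iff fun t => by simp only [← le_sub_iff_add_le, kmin_le_iff]

end Kmin

namespace IsPMF

variable {α : Type*} [Fintype α] {p : α → ℝ}

theorem sum_mul_mono (hp : IsPMF p) : Monotone fun f : α → ℝ => ∑ a, p a * f a :=
  fun _ _ hfg => Finset.sum_le_sum fun a _ => mul_le_mul_of_nonneg_left (hfg a) (hp.1 a)

theorem sum_mul_add_const (hp : IsPMF p) (f : α → ℝ) (c : ℝ) :
    ∑ a, p a * (f a + c) = ∑ a, p a * f a + c := by
  simp only [mul_add, Finset.sum_add_distrib, ← Finset.sum_mul, hp.2, one_mul]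

theorem pi {κ : Type*} [Fintype κ] [DecidableEq κ] {α : κ → Type*} [∀ j, Fintype (α j)]
    {p : ∀ j, α j → ℝ} (hp : ∀ j, IsPMF (p j)) :
    IsPMF fun v : ∀ j, α j => ∏ j, p j (v j) := by
  refine ⟨fun v => Finset.prod_nonneg fun j _ => (hp j).1 _, ?_⟩
  rw [← Fintype.prod_sum]
  exact Finset.prod_eq_one fun j _ => (hp j).2

theorem sum_prod_mul_comp_castAdd (hp : IsPMF p) (m d : ℕ) (f : (Fin m → α) → ℝ) :
    ∑ v : Fin (m + d) → α, (∏ j, p (v j)) * f (fun j => v (Fin.castAdd d j)) =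
      ∑ v : Fin m → α, (∏ j, p (v j)) * f v := by
  have hmass : ∑ w : Fin d → α, ∏ j, p (w j) = 1 := (pi fun _ => hp).2
  calc _ = ∑ v : Fin m → α, ∑ w : Fin d → α,
          ((∏ j, p (v j)) * ∏ j, p (w j)) * f v := by
        rw [← (Fin.appendEquiv m d).sum_comp, Fintype.sum_prod_type]
        simp only [Fin.appendEquiv, Equiv.coe_fn_mk, Fin.prod_univ_add, Fin.append_left,
          Fin.append_right]
    _ = ∑ v : Fin m → α, (∏ j, p (v j)) * f v := by
        simp only [← Finset.sum_mul, ← Finset.mul_sum, hmass, mul_one]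

end IsPMF

/-- The expectation `E[kmin_k (x (v_0), …, x (v_{N-1}))]` of the `k`-th order statistic (0-indexed)
of `x` over `N` independent draws `v_j` from `P`. -/
noncomputable def expectedKmin {ι : Type*} [Fintype ι] (P : ι → ℝ) {N : ℕ} (k : Fin N)
    (x : ι → ℝ) : ℝ :=
  ∑ v : Fin N → ι, (∏ j, P (v j)) * kmin (fun j => x (v j)) k

section ExpectedKmin

variable {ι : Type*} [Fintype ι] {P : ι → ℝ} (hP : IsPMF P) {N N' : ℕ}

include hP

theorem expectedKmin_mono (k : Fin N) : Monotone (expectedKmin P k) :=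
  fun _ _ hxy => (IsPMF.pi fun _ => hP).sum_mul_mono fun v => kmin_mono k fun j => hxy (v j)

theorem expectedKmin_add_const (k : Fin N) (x : ι → ℝ) (c : ℝ) :
    expectedKmin P k (fun i => x i + c) = expectedKmin P k x + c := by
  simp only [expectedKmin, kmin_add_const]
  exact (IsPMF.pi fun _ => hP).sum_mul_add_const _ c

theorem expectedKmin_anti {k : Fin N} {l : Fin N'} (hN : N ≤ N') (hlk : (l : ℕ) ≤ k)
    (x : ι → ℝ) : expectedKmin P l x ≤ expectedKmin P k x := by
  obtain ⟨d, rfl⟩ := Nat.exists_eq_add_of_le hN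
  calc expectedKmin P l x
      ≤ ∑ v : Fin (N + d) → ι, (∏ j, P (v j)) * kmin (fun j => x (v (Fin.castAdd d j))) k :=
        (IsPMF.pi fun _ => hP).sum_mul_mono fun v =>
          kmin_le_kmin_of_injective (Fin.castAdd_injective N d) (fun _ => le_rfl) hlk
    _ = expectedKmin P k x :=
        hP.sum_prod_mul_comp_castAdd N d fun v => kmin (fun j => x (v j)) k

end ExpectedKmin

/-- The expected continuation value `∑ s', m(s') ∑ a', π(a'|s') Q(s',a')` under a next-state
distribution `m`. -/
def nextValue {S A : Type*} [Fintype S] [Fintype A] (π : S → A → ℝ) (m : S → ℝ)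
    (Q : S → A → ℝ) : ℝ :=
  ∑ s', m s' * ∑ a', π s' a' * Q s' a'

section NextValue

variable {S A : Type*} [Fintype S] [Fintype A] {π : S → A → ℝ} (hπ : ∀ s, IsPMF (π s))
  {m : S → ℝ} (hm : IsPMF m)

include hπ hm

theorem nextValue_mono : Monotone (nextValue π m) :=
  fun _ _ hQ => hm.sum_mul_mono fun s' => (hπ s').sum_mul_mono (hQ s')

theorem nextValue_add_const (Q : S → A → ℝ) (c : ℝ) :
    nextValue π m (fun s a => Q s a + c) = nextValue π m Q + c := by
  simp only [nextValue, (hπ _).sum_mul_add_const, hm.sum_mul_add_const]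

end NextValue

section PessBellman

variable {S A ι : Type*} [Fintype S] [Fintype A] [Fintype ι] (r : S → A → ℝ) {γ : ℝ}
  {P : ι → ℝ} (hP : IsPMF P) {M : ι → S → A → S → ℝ} {π : S → A → ℝ} {N N' : ℕ}

theorem pessBellman_apply (k : Fin N) (Q : S → A → ℝ) (s : S) (a : A) :
    pessBellman r γ P M π N k Q s a =
      r s a + γ * expectedKmin P k fun i => nextValue π (M i s a) Q :=
  rfl

include hP

theorem pessBellman_mono (hγ : 0 ≤ γ) (hπ : ∀ s, IsPMF (π s)) (hM : ∀ i s a, IsPMF (M i s a))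
    (k : Fin N) : Monotone (pessBellman r γ P M π N k) := by
  intro Q Q' hQ s a
  simp only [pessBellman_apply]
  gcongr
  exact expectedKmin_mono hP k fun i => nextValue_mono hπ (hM i s a) hQ

theorem pessBellman_add_smul_one (hπ : ∀ s, IsPMF (π s)) (hM : ∀ i s a, IsPMF (M i s a))
    (k : Fin N) (Q : S → A → ℝ) (c : ℝ) :
    pessBellman r γ P M π N k (Q + c • 1) = pessBellman r γ P M π N k Q + (γ * c) • 1 := by
  have hshift : Q + c • 1 = fun s a => Q s a + c := by ext; simp
  ext s a
  simp only [hshift, pessBellman_apply, nextValue_add_const hπ (hM _ s a),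
    expectedKmin_add_const hP, Pi.add_apply, Pi.smul_apply, Pi.one_apply, smul_eq_mul]
  ring

theorem pessBellman_anti (hγ : 0 ≤ γ) {k : Fin N} {l : Fin N'} (hN : N ≤ N')
    (hlk : (l : ℕ) ≤ k) (Q : S → A → ℝ) :
    pessBellman r γ P M π N' l Q ≤ pessBellman r γ P M π N k Q := by
  intro s a
  simp only [pessBellman_apply]
  gcongr
  exact expectedKmin_anti hP hN hlk _

end PessBellman

theorem pessBellman_fixedPoint_anti_N_general {S A ι : Type*} [Fintype S] [Fintype A] [Fintype ι]
    (r : S → A → ℝ) {γ : ℝ} (hγ0 : 0 ≤ γ) (hγ1 : γ < 1)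
    {π : S → A → ℝ} (hπ : ∀ s, IsPMF (π s)) {P : ι → ℝ} (hP : IsPMF P)
    {M : ι → S → A → S → ℝ} (hM : ∀ i s a, IsPMF (M i s a))
    {N N' : ℕ} {k : Fin N} {l : Fin N'} (hN : N ≤ N') (hlk : (l : ℕ) ≤ k) {Q Q' : S → A → ℝ}
    (hQ : pessBellman r γ P M π N k Q ≤ Q) (hQ' : Q' ≤ pessBellman r γ P M π N' l Q') :
    Q' ≤ Q := by
  have hsub : Q' ≤ pessBellman r γ P M π N k Q' :=
    hQ'.trans (pessBellman_anti r hP hγ0 hN hlk Q')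
  exact le_of_le_map_of_map_le_of_discount hγ0 hγ1 (pessBellman_mono r hP hγ0 hπ hM k)
    (fun w c _ => (pessBellman_add_smul_one r hP hπ hM k w c).le) hsub hQ
    (exists_nonneg_le_add_smul_one Q' Q)

/-- Theorem 3, first bullet: for fixed `k ≥ 1` and `N ≥ k`, the fixed points of the
`(N,k)`- and `(N+1,k)`-pessimistic Bellman operators satisfy
`Q^π_{N+1,k}(s,a) ≤ Q^π_{N,k}(s,a)` for all `(s,a)`. -/
theorem pessBellman_fixedPoint_anti_N {S A ι : Type*} [Fintype S] [Fintype A] [Fintype ι]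
    (r : S → A → ℝ) (γ : ℝ) (hγ0 : 0 ≤ γ) (hγ1 : γ < 1)
    (π : S → A → ℝ) (hπ : ∀ s, IsPMF (π s))
    (P : ι → ℝ) (hP : IsPMF P)
    (M : ι → S → A → S → ℝ) (hM : ∀ v s a, IsPMF (M v s a))
    (N k : ℕ) (hk1 : 1 ≤ k) (hkN : k ≤ N)
    (Q1 Q2 : S → A → ℝ)
    (hQ1 : pessBellman r γ P M π N ⟨k - 1, by omega⟩ Q1 = Q1)
    (hQ2 : pessBellman r γ P M π (N + 1) ⟨k - 1, by omega⟩ Q2 = Q2) :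
    ∀ s a, Q2 s a ≤ Q1 s a :=
  pessBellman_fixedPoint_anti_N_general r hγ0 hγ1 hπ hP hM N.le_succ le_rfl hQ1.le hQ2.ge
end

section
/- (Theorem 5, iterative regularized policy optimization part) Fix α > 0 and let π_0 be a policy with π_0(a|s) > 0 for all s, a. Define the iteration: π_{i+1}(a|s) = π_i(a|s)·exp(Q̄*_i(s,a)/α) / (Σ_b π_i(b|s)·exp(Q̄*_i(s,b)/α)), where Q̄*_i := Q̄*_{N,k;π_i} is the unique fixed point of the soft (N,k)-pessimistic Bellman operator with reference policy π_i. Then: (i) the sequence of unregularized fixed points is pointwise nondecreasing, Q^{π_{i+1}}_{N,k}(s,a) ≥ Q^{π_i}_{N,k}(s,a) for all (s,a), and converges pointwise as i → ∞; and (ii) for any s, a, a' with lim_{i→∞} Q^{π_i}_{N,k}(s,a) > lim_{i→∞} Q^{π_i}_{N,k}(s,a'), the ratio π_i(a|s)/π_i(a'|s) tends to infinity as i → ∞. -/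
/-- Kullback–Leibler divergence `KL(p‖q) = Σ_a p(a)·log(p(a)/q(a))` on a finite type
(with the convention `0·log 0 = 0`, automatic here). -/
noncomputable def KLdiv {α : Type*} [Fintype α] (p q : α → ℝ) : ℝ :=
  ∑ a, p a * Real.log (p a / q a)

/-- The soft `(N,k)`-pessimistic Bellman operator with reference policy `μ` and
coefficient `α` (with `k` given 0-indexed as `k : Fin N`):
`(B̄*_{N,k;μ} Q)(s,a) = r(s,a) + γ · Σ_{v} (Π_j P(v_j)) ·
  kmin_k( j ↦ Σ_{s'} M(v_j)(s,a)(s') · α·log Σ_{a'} μ(a'|s')·exp(Q(s',a')/α) )`. -/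
noncomputable def softBellman {S A ι : Type*} [Fintype S] [Fintype A] [Fintype ι]
    (r : S → A → ℝ) (γ : ℝ) (P : ι → ℝ) (M : ι → S → A → S → ℝ)
    (μ : S → A → ℝ) (α : ℝ) (N : ℕ) (k : Fin N) (Q : S → A → ℝ) : S → A → ℝ :=
  fun s a => r s a + γ * ∑ v : Fin N → ι, (∏ j, P (v j)) *
    kmin (fun j => ∑ s', M (v j) s a s' *
      (α * Real.log (∑ a', μ s' a' * Real.exp (Q s' a' / α)))) k

/-- The regularized `(N,k)`-pessimistic evaluation operator for policy `π`, reference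
policy `μ` and coefficient `α` (with `k` given 0-indexed as `k : Fin N`):
`(B̄^π_{N,k;μ} Q)(s,a) = r(s,a) + γ · Σ_{v} (Π_j P(v_j)) ·
  kmin_k( j ↦ Σ_{s'} M(v_j)(s,a)(s') · (Σ_{a'} π(a'|s')·Q(s',a') − α·KL(π(·|s')‖μ(·|s'))) )`. -/
noncomputable def regBellman {S A ι : Type*} [Fintype S] [Fintype A] [Fintype ι]
    (r : S → A → ℝ) (γ : ℝ) (P : ι → ℝ) (M : ι → S → A → S → ℝ)
    (π μ : S → A → ℝ) (α : ℝ) (N : ℕ) (k : Fin N) (Q : S → A → ℝ) : S → A → ℝ :=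
  fun s a => r s a + γ * ∑ v : Fin N → ι, (∏ j, P (v j)) *
    kmin (fun j => ∑ s', M (v j) s a s' *
      ((∑ a', π s' a' * Q s' a') - α * KLdiv (π s') (μ s'))) k

/-!
The pessimistic backup `T` enters only through monotonicity and `γ`-discounting of constants. If
`Q = T V` and `Q' = T W`, and every bound `Q ≤ Q' + c` forces `V ≤ W + c`, then the largest gap
`c = max (Q - Q')` satisfies `c ≤ γ c`, so `Q ≤ Q'`.

By Jensen's inequality for `exp`, the soft value of a reference distribution lies above its plain
expectation. Tilting by `exp (q / α)` is undone by tilting with coefficient `-α`, and this leaves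
the soft value unchanged, so the same inequality with `-α` puts the soft value below the
expectation under the tilted distribution. Comparing fixed points twice gives the sandwich
`Q^{π_i} ≤ Q̄*_i ≤ Q^{π_{i+1}}`. Hence `Q^{π_i}` increases, and since it is bounded it converges;
`Q̄*_i` has the same limit. As `π_i(a|s) / π_i(a'|s)` is multiplied by
`exp ((Q̄*_i(s,a) - Q̄*_i(s,a')) / α)` at each step, it grows at least geometrically when the limits
at `a` and `a'` are separated.
-/

open Filter Finset
open scoped Topology

section OrderStatistic

variable {N : ℕ}

theorem kmin_le_iff_lt_card (x : Fin N → ℝ) (k : Fin N) (t : ℝ) :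
    kmin x k ≤ t ↔ (k : ℕ) < #{j | x j ≤ t} := by
  have card_sort : #{j | (x ∘ Tuple.sort x) j ≤ t} = #{j | x j ≤ t} :=
    card_equiv (Tuple.sort x) fun j => by
      simp only [mem_filter_univ, Function.comp_apply]
  rw [← card_sort, Tuple.lt_card_le_iff_apply_le_of_monotone (Tuple.monotone_sort x)]
  rfl

theorem kmin_le_kmin_add {x y : Fin N → ℝ} {c : ℝ} (h : ∀ j, x j ≤ y j + c) (k : Fin N) :
    kmin x k ≤ kmin y k + c := by
  rw [kmin_le_iff_lt_card]
  refine ((kmin_le_iff_lt_card y k _).1 le_rfl).trans_le (card_le_card fun j hj => ?_)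
  rw [mem_filter_univ] at hj ⊢
  linarith [h j]

end OrderStatistic

namespace IsPMF

variable {A : Type*} [Fintype A] {p : A → ℝ}

theorem sum_mul_pos (hp : IsPMF p) {f : A → ℝ} (hf : ∀ a, 0 < f a) : 0 < ∑ a, p a * f a := by
  obtain ⟨a, -, ha⟩ : ∃ a ∈ univ, p a ≠ 0 := exists_ne_zero_of_sum_ne_zero (hp.2 ▸ one_ne_zero)
  exact sum_pos' (fun b _ => mul_nonneg (hp.1 b) (hf b).le)
    ⟨a, mem_univ a, mul_pos ((hp.1 a).lt_of_ne' ha) (hf a)⟩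

theorem dotProduct_le_dotProduct_add (hp : IsPMF p) {q q' : A → ℝ} {c : ℝ}
    (h : ∀ a, q a ≤ q' a + c) : p ⬝ᵥ q ≤ p ⬝ᵥ q' + c :=
  calc p ⬝ᵥ q ≤ ∑ a, p a * (q' a + c) :=
        sum_le_sum fun a _ => mul_le_mul_of_nonneg_left (h a) (hp.1 a)
    _ = p ⬝ᵥ q' + c := by
        simp only [dotProduct, mul_add, sum_add_distrib, ← sum_mul, hp.2, one_mul]

theorem dotProduct_le_of_le (hp : IsPMF p) {q : A → ℝ} {c : ℝ} (h : ∀ a, q a ≤ c) :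
    p ⬝ᵥ q ≤ c := by
  simpa only [dotProduct_zero, zero_add] using
    hp.dotProduct_le_dotProduct_add (q' := 0) (by simpa using h)

theorem dotProduct_le_log_sum_exp (hp : IsPMF p) (q : A → ℝ) :
    p ⬝ᵥ q ≤ Real.log (∑ a, p a * Real.exp (q a)) :=
  (Real.le_log_iff_exp_le (hp.sum_mul_pos fun _ => Real.exp_pos _)).2 <|
    convexOn_exp.map_sum_le (fun a _ => hp.1 a) hp.2 fun _ _ => Set.mem_univ _

theorem prod_pi {κ : Type*} [Fintype κ] [DecidableEq κ] {ι : κ → Type*} [∀ j, Fintype (ι j)]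
    {p : ∀ j, ι j → ℝ} (hp : ∀ j, IsPMF (p j)) : IsPMF fun v : ∀ j, ι j => ∏ j, p j (v j) :=
  ⟨fun _ => prod_nonneg fun j _ => (hp j).1 _, by
    simp only [← Fintype.prod_sum, (hp _).2, prod_const_one]⟩

end IsPMF

section SoftValue

variable {A : Type*} [Fintype A]

/-- The soft value (log-sum-exp, or entropic, expectation) of `q` under the reference distribution
`p` with coefficient `α`. Negative `α` is allowed and gives the soft-min counterpart. -/
noncomputable def softValue (α : ℝ) (p q : A → ℝ) : ℝ :=
  α * Real.log (∑ a, p a * Real.exp (q a / α))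

/-- The exponential tilt of `p` by `q / α`: the distribution proportional to `p * exp (q / α)`,
which is the policy update of the iteration at a single state. -/
noncomputable def tilt (α : ℝ) (p q : A → ℝ) (a : A) : ℝ :=
  p a * Real.exp (q a / α) / ∑ b, p b * Real.exp (q b / α)

variable {α : ℝ} {p : A → ℝ}

theorem IsPMF.sum_mul_exp_div_pos (hp : IsPMF p) (α : ℝ) (q : A → ℝ) :
    0 < ∑ a, p a * Real.exp (q a / α) :=
  hp.sum_mul_pos fun _ => Real.exp_pos _

theorem IsPMF.tilt (hp : IsPMF p) (α : ℝ) (q : A → ℝ) : IsPMF (tilt α p q) := by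
  have hZ := hp.sum_mul_exp_div_pos α q
  refine ⟨fun a => div_nonneg (mul_nonneg (hp.1 a) (Real.exp_pos _).le) hZ.le, ?_⟩
  simp only [_root_.tilt, ← sum_div, div_self hZ.ne']

theorem tilt_pos (hp : IsPMF p) (α : ℝ) (q : A → ℝ) {a : A} (ha : 0 < p a) : 0 < tilt α p q a :=
  div_pos (mul_pos ha (Real.exp_pos _)) (hp.sum_mul_exp_div_pos α q)

theorem tilt_div_tilt (hp : IsPMF p) (α : ℝ) (q : A → ℝ) (a a' : A) :
    tilt α p q a / tilt α p q a' = p a / p a' * Real.exp ((q a - q a') / α) := by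
  rw [tilt, tilt, div_div_div_cancel_right₀ (hp.sum_mul_exp_div_pos α q).ne', sub_div,
    Real.exp_sub, mul_div_mul_comm]

theorem softValue_neg_tilt (hp : IsPMF p) (α : ℝ) (q : A → ℝ) :
    softValue (-α) (tilt α p q) q = softValue α p q := by
  set Z := ∑ a, p a * Real.exp (q a / α) with hZ
  have untilt (a : A) : tilt α p q a * Real.exp (q a / -α) = p a / Z := by
    rw [tilt, ← hZ, div_neg, Real.exp_neg]
    field_simp
  simp only [softValue, untilt, ← sum_div, hp.2, ← hZ, one_div, Real.log_inv, neg_mul_neg]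

theorem dotProduct_le_softValue (hp : IsPMF p) (hα : 0 < α) (q : A → ℝ) :
    p ⬝ᵥ q ≤ softValue α p q := by
  have jensen := hp.dotProduct_le_log_sum_exp fun a => q a / α
  rw [show (fun a => q a / α) = α⁻¹ • q by ext; simp [div_eq_inv_mul], dotProduct_smul,
    smul_eq_mul, inv_mul_le_iff₀ hα] at jensen
  simpa [softValue, div_eq_inv_mul] using jensen

theorem softValue_le_dotProduct (hp : IsPMF p) (hα : α < 0) (q : A → ℝ) :
    softValue α p q ≤ p ⬝ᵥ q := by
  have h := dotProduct_le_softValue hp (neg_pos.2 hα) (-q)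
  simpa [softValue] using h

theorem softValue_le_tilt_dotProduct (hp : IsPMF p) (hα : 0 < α) (q : A → ℝ) :
    softValue α p q ≤ tilt α p q ⬝ᵥ q :=
  softValue_neg_tilt hp α q ▸ softValue_le_dotProduct (hp.tilt α q) (neg_lt_zero.2 hα) q

end SoftValue

/-- A backup, mapping state values to state-action values, is `γ`-discounted if it is monotone and
raising all values by `c` raises the result by at most `γ * c`. Blackwell's two conditions are
merged into one inequality; `c` may be negative. -/
def IsDiscountedBackup {S A : Type*} (γ : ℝ) (T : (S → ℝ) → S → A → ℝ) : Prop :=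
  ∀ ⦃V W : S → ℝ⦄ ⦃c : ℝ⦄, (∀ s, V s ≤ W s + c) → ∀ s a, T V s a ≤ T W s a + γ * c

namespace IsDiscountedBackup

variable {S A : Type*} {γ : ℝ} {T : (S → ℝ) → S → A → ℝ}

section Finite

variable [Finite S] [Finite A]

theorem le_of_backup_eq (hT : IsDiscountedBackup γ T) (hγ : γ < 1) {V W : S → ℝ}
    {Q Q' : S → A → ℝ} (hQ : T V = Q) (hQ' : T W = Q')
    (h : ∀ c, (∀ s a, Q s a ≤ Q' s a + c) → ∀ s, V s ≤ W s + c) : Q ≤ Q' := by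
  subst hQ hQ'
  intro s a
  have : Nonempty (S × A) := ⟨(s, a)⟩
  obtain ⟨⟨s₀, a₀⟩, hmax⟩ := Finite.exists_max fun x : S × A => T V x.1 x.2 - T W x.1 x.2
  set c := T V s₀ a₀ - T W s₀ a₀
  have gap_le (s a) : T V s a ≤ T W s a + c := sub_le_iff_le_add'.1 (hmax (s, a))
  have contract : c ≤ γ * c := sub_le_iff_le_add'.2 (hT (h c gap_le) s₀ a₀)
  have : c ≤ 0 := by nlinarith
  linarith [gap_le s a]

theorem exists_backup_le (hT : IsDiscountedBackup γ T) (hγ : γ < 1) :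
    ∃ B, ∀ V Q, T V = Q → (∀ c, (∀ s a, Q s a ≤ c) → ∀ s, V s ≤ c) → ∀ s a, Q s a ≤ B := by
  obtain ⟨R, hR⟩ := (Set.finite_range fun x : S × A => T 0 x.1 x.2).bddAbove
  refine ⟨R / (1 - γ), fun V Q hQ h s a => ?_⟩
  subst hQ
  have : Nonempty (S × A) := ⟨(s, a)⟩
  obtain ⟨⟨s₀, a₀⟩, hmax⟩ := Finite.exists_max fun x : S × A => T V x.1 x.2
  set c := T V s₀ a₀
  have le_shift (s) : V s ≤ (0 : S → ℝ) s + c := by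
    simpa using h c (fun s a => hmax (s, a)) s
  have contract : c ≤ R + γ * c :=
    (hT le_shift s₀ a₀).trans (add_le_add_left (hR ⟨(s₀, a₀), rfl⟩) _)
  refine (hmax (s, a)).trans ((le_div_iff₀ (sub_pos.2 hγ)).2 ?_)
  linarith

end Finite

variable [Finite S] [Fintype A] {α : ℝ} {π Q Qsoft : S → A → ℝ}

theorem evaluation_le_soft (hT : IsDiscountedBackup γ T) (hγ : γ < 1) (hα : 0 < α)
    (hπ : ∀ s, IsPMF (π s)) (hQ : T (fun s => π s ⬝ᵥ Q s) = Q)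
    (hsoft : T (fun s => softValue α (π s) (Qsoft s)) = Qsoft) : Q ≤ Qsoft :=
  hT.le_of_backup_eq hγ hQ hsoft fun c hc s =>
    ((hπ s).dotProduct_le_dotProduct_add (hc s)).trans
      (add_le_add_left (dotProduct_le_softValue (hπ s) hα _) c)

theorem soft_le_evaluation_tilt (hT : IsDiscountedBackup γ T) (hγ : γ < 1) (hα : 0 < α)
    (hπ : ∀ s, IsPMF (π s)) (hsoft : T (fun s => softValue α (π s) (Qsoft s)) = Qsoft)
    (hQ : T (fun s => tilt α (π s) (Qsoft s) ⬝ᵥ Q s) = Q) : Qsoft ≤ Q :=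
  hT.le_of_backup_eq hγ hsoft hQ fun _ hc s =>
    (softValue_le_tilt_dotProduct (hπ s) hα _).trans
      (((hπ s).tilt α _).dotProduct_le_dotProduct_add (hc s))

theorem exists_evaluation_le (hT : IsDiscountedBackup γ T) (hγ : γ < 1) :
    ∃ B, ∀ π Q : S → A → ℝ, (∀ s, IsPMF (π s)) → T (fun s => π s ⬝ᵥ Q s) = Q →
      ∀ s a, Q s a ≤ B := by
  obtain ⟨B, hB⟩ := hT.exists_backup_le hγ
  exact ⟨B, fun π Q hπ hQ => hB _ Q hQ fun c hc s => (hπ s).dotProduct_le_of_le (hc s)⟩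

end IsDiscountedBackup

/-- The backup of state values common to `pessBellman` and `softBellman`, which apply it to the
expected, respectively the soft, value of the policy. -/
noncomputable def pessBackup {S A ι : Type*} [Fintype S] [Fintype ι] (r : S → A → ℝ) (γ : ℝ)
    (P : ι → ℝ) (M : ι → S → A → S → ℝ) {N : ℕ} (k : Fin N) (V : S → ℝ) : S → A → ℝ :=
  fun s a => r s a + γ * ∑ v : Fin N → ι, (∏ j, P (v j)) * kmin (fun j => M (v j) s a ⬝ᵥ V) k

theorem isDiscountedBackup_pessBackup {S A ι : Type*} [Fintype S] [Fintype ι] (r : S → A → ℝ)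
    {γ : ℝ} (hγ : 0 ≤ γ) {P : ι → ℝ} (hP : IsPMF P) {M : ι → S → A → S → ℝ}
    (hM : ∀ v s a, IsPMF (M v s a)) {N : ℕ} (k : Fin N) :
    IsDiscountedBackup γ (pessBackup r γ P M k) := by
  intro V W c h s a
  have expect_le := (IsPMF.prod_pi fun _ : Fin N => hP).dotProduct_le_dotProduct_add fun v =>
    kmin_le_kmin_add (fun j => (hM (v j) s a).dotProduct_le_dotProduct_add h) k
  rw [pessBackup, pessBackup, add_assoc, ← mul_add]
  gcongr
  exact expect_le

theorem tendsto_atTop_of_succ_eq_mul {u f : ℕ → ℝ} {l : ℝ} (hu : ∀ n, 0 < u n)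
    (hsucc : ∀ n, u (n + 1) = u n * f n) (hf : Tendsto f atTop (𝓝 l)) (hl : 1 < l) :
    Tendsto u atTop atTop := by
  obtain ⟨c, hc1, hcl⟩ := exists_between hl
  obtain ⟨n₀, hn₀⟩ := eventually_atTop.1 (hf.eventually_const_lt hcl)
  rw [← tendsto_add_atTop_iff_nat n₀]
  refine tendsto_atTop_of_geom_le (hu _) hc1 fun n => ?_
  rw [Nat.add_right_comm, hsucc, mul_comm]
  exact mul_le_mul_of_nonneg_left (hn₀ _ (Nat.le_add_left _ _)).le (hu _).le

section TiltIteration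

variable {A : Type*} [Fintype A] {α : ℝ} {p q : ℕ → A → ℝ}

theorem isPMF_of_tilt_iteration (h0 : IsPMF (p 0))
    (hrec : ∀ i, p (i + 1) = tilt α (p i) (q i)) (i : ℕ) : IsPMF (p i) := by
  induction i with
  | zero => exact h0
  | succ i ih => exact hrec i ▸ ih.tilt α _

theorem pos_of_tilt_iteration (h0 : IsPMF (p 0))
    (hrec : ∀ i, p (i + 1) = tilt α (p i) (q i)) {a : A} (ha : 0 < p 0 a) (i : ℕ) :
    0 < p i a := by
  induction i with
  | zero => exact ha
  | succ i ih => exact hrec i ▸ tilt_pos (isPMF_of_tilt_iteration h0 hrec i) α _ ih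

theorem tendsto_ratio_atTop_of_tilt_iteration (hα : 0 < α) (h0 : IsPMF (p 0))
    (hrec : ∀ i, p (i + 1) = tilt α (p i) (q i)) {a a' : A} (ha : 0 < p 0 a) (ha' : 0 < p 0 a')
    {L L' : ℝ} (hL : Tendsto (fun i => q i a) atTop (𝓝 L))
    (hL' : Tendsto (fun i => q i a') atTop (𝓝 L')) (hlt : L' < L) :
    Tendsto (fun i => p i a / p i a') atTop atTop := by
  have growth : Tendsto (fun i => Real.exp ((q i a - q i a') / α)) atTop
      (𝓝 (Real.exp ((L - L') / α))) :=
    (Real.continuous_exp.tendsto _).comp ((hL.sub hL').div_const α)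
  refine tendsto_atTop_of_succ_eq_mul (fun i => ?_) (fun i => ?_) growth
    (Real.one_lt_exp_iff.2 (div_pos (sub_pos.2 hlt) hα))
  · exact div_pos (pos_of_tilt_iteration h0 hrec ha i) (pos_of_tilt_iteration h0 hrec ha' i)
  · rw [hrec, tilt_div_tilt (isPMF_of_tilt_iteration h0 hrec i)]

end TiltIteration

theorem iterative_regularized_policy_optimization_general
    {S A : Type*} [Finite S] [Fintype A] {T : (S → ℝ) → S → A → ℝ} {γ : ℝ}
    (hT : IsDiscountedBackup γ T) (hγ : γ < 1) {α : ℝ} (hα : 0 < α)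
    {π Qsoft Q : ℕ → S → A → ℝ} (hπ0 : ∀ s, IsPMF (π 0 s))
    (hsoft : ∀ i, T (fun s => softValue α (π i s) (Qsoft i s)) = Qsoft i)
    (hrec : ∀ i s, π (i + 1) s = tilt α (π i s) (Qsoft i s))
    (hQ : ∀ i, T (fun s => π i s ⬝ᵥ Q i s) = Q i) :
    ((∀ i s a, Q i s a ≤ Q (i + 1) s a) ∧
      ∀ s a, ∃ L, Tendsto (fun i => Q i s a) atTop (𝓝 L)) ∧
    ∀ s a a' L L', 0 < π 0 s a → 0 < π 0 s a' →
      Tendsto (fun i => Q i s a) atTop (𝓝 L) → Tendsto (fun i => Q i s a') atTop (𝓝 L') →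
      L' < L → Tendsto (fun i => π i s a / π i s a') atTop atTop := by
  have hπ (i s) : IsPMF (π i s) := isPMF_of_tilt_iteration (p := (π · s)) (hπ0 s) (hrec · s) i
  have lower (i) : Q i ≤ Qsoft i := hT.evaluation_le_soft hγ hα (hπ i) (hQ i) (hsoft i)
  have upper (i) : Qsoft i ≤ Q (i + 1) :=
    hT.soft_le_evaluation_tilt hγ hα (hπ i) (hsoft i) (by simpa only [hrec] using hQ (i + 1))
  have mono (i s a) : Q i s a ≤ Q (i + 1) s a := (lower i s a).trans (upper i s a)
  have soft_tendsto {s a L} (hL : Tendsto (fun i => Q i s a) atTop (𝓝 L)) :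
      Tendsto (fun i => Qsoft i s a) atTop (𝓝 L) :=
    tendsto_of_tendsto_of_tendsto_of_le_of_le hL (hL.comp (tendsto_add_atTop_nat 1))
      (fun i => lower i s a) fun i => upper i s a
  obtain ⟨B, hB⟩ := hT.exists_evaluation_le hγ
  refine ⟨⟨mono, fun s a => ⟨_, tendsto_atTop_ciSup (monotone_nat_of_le_succ (mono · s a))
    ⟨B, Set.forall_mem_range.2 fun i => hB _ _ (hπ i) (hQ i) s a⟩⟩⟩, ?_⟩
  intro s a a' L L' ha ha' hL hL' hlt
  exact tendsto_ratio_atTop_of_tilt_iteration (p := (π · s)) hα (hπ0 s) (hrec · s) ha ha'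
    (soft_tendsto hL) (soft_tendsto hL') hlt

/-- Theorem 5, iterative regularized policy optimization part.  Starting from an
everywhere-positive policy `π 0` and iterating
`π_{i+1}(a|s) = π_i(a|s)·exp(Q̄*_i(s,a)/α) / Σ_b π_i(b|s)·exp(Q̄*_i(s,b)/α)`, where
`Q̄*_i` is the fixed point of the soft `(N,k)`-pessimistic Bellman operator with
reference policy `π_i`, the unregularized fixed points `Q^{π_i}_{N,k}` are pointwise
nondecreasing in `i` and converge pointwise; moreover, whenever
`lim_i Q^{π_i}_{N,k}(s,a) > lim_i Q^{π_i}_{N,k}(s,a')`, the ratio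
`π_i(a|s)/π_i(a'|s)` tends to infinity. -/
theorem iterative_regularized_policy_optimization
    {S A ι : Type*} [Fintype S] [Fintype A] [Fintype ι]
    (r : S → A → ℝ) (γ : ℝ) (hγ0 : 0 ≤ γ) (hγ1 : γ < 1)
    (P : ι → ℝ) (hP : IsPMF P)
    (M : ι → S → A → S → ℝ) (hM : ∀ v s a, IsPMF (M v s a))
    (N : ℕ) (hN : 1 ≤ N) (k : ℕ) (hk1 : 1 ≤ k) (hkN : k ≤ N)
    (α : ℝ) (hα : 0 < α)
    (π : ℕ → S → A → ℝ) (hπ0 : ∀ s, IsPMF (π 0 s)) (hπ0pos : ∀ s a, 0 < π 0 s a)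
    (Qstar : ℕ → S → A → ℝ)
    (hQstar : ∀ i, softBellman r γ P M (π i) α N ⟨k - 1, by omega⟩ (Qstar i) = Qstar i)
    (hrec : ∀ i s a, π (i + 1) s a
      = π i s a * Real.exp (Qstar i s a / α) / ∑ b, π i s b * Real.exp (Qstar i s b / α))
    (Qfix : ℕ → S → A → ℝ)
    (hQfix : ∀ i, pessBellman r γ P M (π i) N ⟨k - 1, by omega⟩ (Qfix i) = Qfix i) :
    -- (i) pointwise nondecreasing and pointwise convergent
    ((∀ i s a, Qfix i s a ≤ Qfix (i + 1) s a) ∧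
      (∀ s a, ∃ L : ℝ, Filter.Tendsto (fun i => Qfix i s a) Filter.atTop (nhds L))) ∧
    -- (ii) policy ratios diverge on strictly separated limits
    (∀ s a a' (La La' : ℝ),
      Filter.Tendsto (fun i => Qfix i s a) Filter.atTop (nhds La) →
      Filter.Tendsto (fun i => Qfix i s a') Filter.atTop (nhds La') →
      La' < La →
      Filter.Tendsto (fun i => π i s a / π i s a') Filter.atTop Filter.atTop) := by
  obtain ⟨hconv, hratio⟩ := iterative_regularized_policy_optimization_general
    (isDiscountedBackup_pessBackup r hγ0 hP hM ⟨k - 1, by omega⟩) hγ1 hα hπ0 hQstar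
    (fun i s => funext (hrec i s)) hQfix
  exact ⟨hconv, fun s a a' L L' => hratio s a a' L L' (hπ0pos s a) (hπ0pos s a')⟩
end
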